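/- arXiv:2112.08574 — 5 statements merged into one kernel-verified Lean document; each statement's English description precedes it below -/
import Mathlib

section
/- Let N be a positive integer, R a complex constant, and let ψ, φ : ℝ → ℂ be differentiable functions satisfying φ(x) = conj(ψ(x)) + R·ψ(x) for all real x. Let a_1,…,a_N : ℝ → ℝ and f_1,…,f_N : ℝ → ℝ be differentiable real-valued functions. Define φ̃(x) = φ(x) + Σ_{n=1}^N a_n(x)·W(φ, f_n)(x) and ψ̃(x) = ψ(x) + Σ_{n=1}^N a_n(x)·W(ψ, f_n)(x). Then φ̃(x) = conj(ψ̃(x)) + R·ψ̃(x) for all real x. -/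
/-! The map `z ↦ conj z + R * z` is real-linear, so it commutes with differentiation and with
multiplication by real-valued functions. Since `u ↦ u + ∑ aₙ W(u, fₙ)` uses only these operations
when the `aₙ` and `fₙ` are real, it preserves the relation `φ = conj ψ + R ψ`. -/

open Filter Topology

/-- The Wronskian of two functions `f g : ℝ → ℂ`. -/
noncomputable def wronskian (f g : ℝ → ℂ) (x : ℝ) : ℂ :=
  f x * deriv g x - deriv f x * g x

/-- The derivative commutes with the real-linear operations `conj` and `R * ·`, and a real-valued
`g` has a real derivative, so `W(·, g)` inherits the scattering relation. -/
lemma wronskian_scattering {R : ℂ} {ψ φ : ℝ → ℂ} (hψ : Differentiable ℝ ψ)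
    (hrel : ∀ x : ℝ, φ x = (starRingEnd ℂ) (ψ x) + R * ψ x)
    {g : ℝ → ℝ} (hg : Differentiable ℝ g) (x : ℝ) :
    wronskian φ (fun t => (g t : ℂ)) x
      = (starRingEnd ℂ) (wronskian ψ (fun t => (g t : ℂ)) x)
        + R * wronskian ψ (fun t => (g t : ℂ)) x := by
  have hφ' : deriv φ x = (starRingEnd ℂ) (deriv ψ x) + R * deriv ψ x := by
    have hd := (hψ x).hasDerivAt
    rw [funext hrel]
    exact (hd.star.add (hd.const_mul R)).deriv
  have hg' : deriv (fun t => (g t : ℂ)) x = ((deriv g x : ℝ) : ℂ) :=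
    (hg x).hasDerivAt.ofReal_comp.deriv
  simp only [wronskian, hφ', hg', hrel x, map_sub, map_mul, Complex.conj_ofReal]
  ring

/-- Gauge transformation lemma: the basic scattering relation
`φ = conj ψ + R ψ` is preserved under Wronskian-type transformations
with real coefficient functions. -/
theorem gauge_transformation (N : ℕ) (hN : 0 < N) (R : ℂ) (ψ φ : ℝ → ℂ)
    (hψ : Differentiable ℝ ψ) (hφ : Differentiable ℝ φ)
    (hrel : ∀ x : ℝ, φ x = (starRingEnd ℂ) (ψ x) + R * ψ x)
    (a f : Fin N → ℝ → ℝ)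
    (ha : ∀ n, Differentiable ℝ (a n)) (hf : ∀ n, Differentiable ℝ (f n)) :
    ∀ x : ℝ,
      φ x + ∑ n : Fin N, (a n x : ℂ) * wronskian φ (fun t => (f n t : ℂ)) x
        = (starRingEnd ℂ)
            (ψ x + ∑ n : Fin N, (a n x : ℂ) * wronskian ψ (fun t => (f n t : ℂ)) x)
          + R * (ψ x + ∑ n : Fin N, (a n x : ℂ) * wronskian ψ (fun t => (f n t : ℂ)) x) := by
  intro x
  simp only [hrel x, wronskian_scattering hψ hrel (hf _) x, map_add, map_sum, map_mul,
    Complex.conj_ofReal, mul_add, Finset.sum_add_distrib, Finset.mul_sum, mul_left_comm R]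
  ring
end

section
/- Let N ≥ 1, let ω_1,…,ω_N be real numbers, let α_1,…,α_N be real numbers, κ > 0 and c ∈ ℝ with (iκ)² ≠ ω_m² for all m. Let φ(x,k) and ψ(x,k) be functions of (x,k) ∈ ℝ × ℂ, differentiable in x, and let y_1,…,y_N, φ_1,…,φ_N : ℝ → ℝ be differentiable. Assume that for every real x: (i) (k − iκ)·φ(x,k) → i c²·ψ(x, iκ) and (k − iκ)·∂ₓφ(x,k) → i c²·∂ₓψ(x, iκ) as k → iκ, and (ii) ψ(x,k) → ψ(x,iκ) and ∂ₓψ(x,k) → ∂ₓψ(x,iκ) as k → iκ. Define φ₊(x,k) = φ(x,k) + Σ_{m=1}^N α_m y_m(x)·W(φ(·,k), φ_m)(x)/(k² − ω_m²) and ψ₊(x,k) = ψ(x,k) + Σ_{m=1}^N α_m y_m(x)·W(ψ(·,k), φ_m)(x)/(k² − ω_m²). Then for every real x, (k − iκ)·φ₊(x,k) → i c²·ψ₊(x, iκ) as k → iκ; that is, the residue relation Res_{k=iκ} φ = i c² ψ(·,iκ) is inherited by the transformed pair (φ₊, ψ₊). -/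
/-!
Multiplication by `k - iκ` commutes with the transformation `φ ↦ φ₊`, because the Wronskian is
linear in its first argument and the remaining factors do not involve `φ`. The transformation uses
only the values of `φ(x, k)` and `∂ₓφ(x, k)`, whose rescaled limits are given, and the denominators
`k² - ω_m²` tend to the nonzero limits `(iκ)² - ω_m²`. Hence the limit can be taken term by term,
and the factor `i c²` comes out of the result by the same linearity.
-/

open Filter Topology Complex

/-- The isolated pole condition `Res_{k = iκ} φ = i c² ψ(·, iκ)` (encoding the
norming constant `c²` of the bound state `-κ²`) is inherited by the pair
`(φ₊, ψ₊)` produced by the binary Darboux transformation. -/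
theorem residue_relation_inherited (N : ℕ) (hN : 0 < N)
    (ω α : Fin N → ℝ) (κ : ℝ) (hκ : 0 < κ) (c : ℝ)
    (hω : ∀ m, (Complex.I * κ)^2 ≠ ((ω m : ℂ))^2)
    (φ ψ : ℝ → ℂ → ℂ)
    (hφdiff : ∀ k : ℂ, Differentiable ℝ (fun x => φ x k))
    (hψdiff : ∀ k : ℂ, Differentiable ℝ (fun x => ψ x k))
    (y φb : Fin N → ℝ → ℝ)
    (hy : ∀ n, Differentiable ℝ (y n)) (hφb : ∀ n, Differentiable ℝ (φb n))
    (hres : ∀ x : ℝ,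
      Tendsto (fun k : ℂ => (k - Complex.I * κ) * φ x k)
        (𝓝[≠] (Complex.I * κ)) (𝓝 (Complex.I * c^2 * ψ x (Complex.I * κ))))
    (hres' : ∀ x : ℝ,
      Tendsto (fun k : ℂ => (k - Complex.I * κ) * deriv (fun t => φ t k) x)
        (𝓝[≠] (Complex.I * κ))
        (𝓝 (Complex.I * c^2 * deriv (fun t => ψ t (Complex.I * κ)) x)))
    (hcont : ∀ x : ℝ,
      Tendsto (fun k : ℂ => ψ x k) (𝓝[≠] (Complex.I * κ))
        (𝓝 (ψ x (Complex.I * κ))))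
    (hcont' : ∀ x : ℝ,
      Tendsto (fun k : ℂ => deriv (fun t => ψ t k) x) (𝓝[≠] (Complex.I * κ))
        (𝓝 (deriv (fun t => ψ t (Complex.I * κ)) x))) :
    ∀ x : ℝ,
      Tendsto
        (fun k : ℂ => (k - Complex.I * κ) *
          (φ x k + ∑ m : Fin N, ((α m * y m x : ℝ) : ℂ) *
            (φ x k * deriv (fun t => ((φb m t : ℝ) : ℂ)) x
              - deriv (fun t => φ t k) x * ((φb m x : ℝ) : ℂ))
            / (k^2 - ((ω m : ℂ))^2)))
        (𝓝[≠] (Complex.I * κ))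
        (𝓝 (Complex.I * c^2 *
          (ψ x (Complex.I * κ) + ∑ m : Fin N, ((α m * y m x : ℝ) : ℂ) *
            (ψ x (Complex.I * κ) * deriv (fun t => ((φb m t : ℝ) : ℂ)) x
              - deriv (fun t => ψ t (Complex.I * κ)) x * ((φb m x : ℝ) : ℂ))
            / ((Complex.I * κ)^2 - ((ω m : ℂ))^2)))) := by
  intro x
  have hk : Tendsto (fun k : ℂ => k) (𝓝[≠] (Complex.I * κ)) (𝓝 (Complex.I * κ)) :=
    tendsto_nhdsWithin_of_tendsto_nhds tendsto_id
  have hsum := tendsto_finsetSum Finset.univ fun m _ =>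
    ((((hres x).mul_const (deriv (fun t => ((φb m t : ℝ) : ℂ)) x)).sub
      ((hres' x).mul_const ((φb m x : ℝ) : ℂ))).const_mul ((α m * y m x : ℝ) : ℂ)).div
      ((hk.pow 2).sub_const (((ω m : ℂ))^2)) (sub_ne_zero.mpr (hω m))
  -- The two sides are the termwise limit with the common factors `k - iκ` and `i c²`
  -- pulled out of the Wronskians.
  convert (hres x).add hsum using 2
  · rw [mul_add, Finset.mul_sum]
    congr 1
    exact Finset.sum_congr rfl fun m _ => by rw [Pi.div_apply]; ring
  · rw [mul_add, Finset.mul_sum]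
    congr 1
    exact Finset.sum_congr rfl fun m _ => by ring
end

section
/- Let ρ > 0 and define τ(x) = 1 − ρx + (ρ/2)·sin(2x). Then τ(x) ≥ 1 for all x ≤ 0, and the function u(x) = sin(x)/τ(x) satisfies −u''(x) + q₀(x)·u(x) = u(x) for all x < 0, where q₀(x) = −2·(d²/dx²) log τ(x). -/
/-!
The bound `τ ≥ 1` is `sin y ≤ y` for `y = -2x ≥ 0`. For the equation, write `u = sin / τ`; then
`-u'' + q₀ u = u + (2 cos · τ' - sin · τ'') / τ²` for any nonvanishing `τ`, and the last numerator
vanishes because `τ' = -2ρ sin²` and `τ'' = -4ρ sin cos`. The first derivatives are only available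
where `τ ≠ 0`, so they are identified on a neighbourhood of the point before differentiating again.
-/

open Filter Topology

/-- The tau function on the left half-line: `τ(x) = 1 - ρx + (ρ/2) sin 2x`. -/
noncomputable def tauLeft (ρ : ℝ) (x : ℝ) : ℝ :=
  1 - ρ * x + (ρ / 2) * Real.sin (2 * x)

/-- The associated Wigner–von Neumann type potential `q₀ = -2 ∂ₓ² log τ`. -/
noncomputable def qWvN (ρ : ℝ) (x : ℝ) : ℝ :=
  -2 * deriv (deriv (fun t => Real.log (tauLeft ρ t))) x

theorem one_le_tauLeft {ρ x : ℝ} (hρ : 0 < ρ) (hx : x ≤ 0) : 1 ≤ tauLeft ρ x := by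
  have h : Real.sin (-(2 * x)) ≤ -(2 * x) := Real.sin_le (by linarith)
  rw [Real.sin_neg] at h
  unfold tauLeft
  nlinarith

theorem hasDerivAt_tauLeft (ρ x : ℝ) :
    HasDerivAt (tauLeft ρ) (-2 * ρ * Real.sin x ^ 2) x := by
  have h2 : HasDerivAt (fun t : ℝ => 2 * t) (2 * 1) x := (hasDerivAt_id x).const_mul 2
  have h := (((hasDerivAt_id x).const_mul ρ).const_sub 1).add (h2.sin.const_mul (ρ / 2))
  refine h.congr_deriv ?_
  rw [Real.cos_two_mul, Real.cos_sq']
  ring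

theorem hasDerivAt_deriv_tauLeft (ρ x : ℝ) :
    HasDerivAt (fun t => -2 * ρ * Real.sin t ^ 2) (-4 * ρ * Real.sin x * Real.cos x) x := by
  refine (((Real.hasDerivAt_sin x).pow 2).const_mul (-2 * ρ)).congr_deriv ?_
  push_cast
  ring

theorem eventually_tauLeft_ne_zero {ρ x : ℝ} (h : tauLeft ρ x ≠ 0) :
    ∀ᶠ t in 𝓝 x, tauLeft ρ t ≠ 0 :=
  (hasDerivAt_tauLeft ρ x).continuousAt.eventually_ne h

theorem qWvN_eq {ρ x : ℝ} (h : tauLeft ρ x ≠ 0) :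
    qWvN ρ x = -2 * ((-4 * ρ * Real.sin x * Real.cos x * tauLeft ρ x
      - -2 * ρ * Real.sin x ^ 2 * (-2 * ρ * Real.sin x ^ 2)) / tauLeft ρ x ^ 2) := by
  have e : deriv (fun t => Real.log (tauLeft ρ t)) =ᶠ[𝓝 x]
      fun t => -2 * ρ * Real.sin t ^ 2 / tauLeft ρ t := by
    filter_upwards [eventually_tauLeft_ne_zero h] with t ht
    exact ((hasDerivAt_tauLeft ρ t).log ht).deriv
  unfold qWvN
  rw [e.deriv_eq, ((hasDerivAt_deriv_tauLeft ρ x).fun_div (hasDerivAt_tauLeft ρ x) h).deriv]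

theorem deriv_deriv_sin_div_tauLeft {ρ x : ℝ} (h : tauLeft ρ x ≠ 0) :
    deriv (deriv (fun t => Real.sin t / tauLeft ρ t)) x =
      ((-Real.sin x * tauLeft ρ x + Real.cos x * (-2 * ρ * Real.sin x ^ 2)
          - (Real.cos x * (-2 * ρ * Real.sin x ^ 2)
            + Real.sin x * (-4 * ρ * Real.sin x * Real.cos x))) * tauLeft ρ x ^ 2
        - (Real.cos x * tauLeft ρ x - Real.sin x * (-2 * ρ * Real.sin x ^ 2))
          * (2 * tauLeft ρ x * (-2 * ρ * Real.sin x ^ 2))) / (tauLeft ρ x ^ 2) ^ 2 := by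
  have e : deriv (fun t => Real.sin t / tauLeft ρ t) =ᶠ[𝓝 x]
      fun t => (Real.cos t * tauLeft ρ t - Real.sin t * (-2 * ρ * Real.sin t ^ 2))
        / tauLeft ρ t ^ 2 := by
    filter_upwards [eventually_tauLeft_ne_zero h] with t ht
    exact ((Real.hasDerivAt_sin t).fun_div (hasDerivAt_tauLeft ρ t) ht).deriv
  have hτ := hasDerivAt_tauLeft ρ x
  have hn := ((Real.hasDerivAt_cos x).fun_mul hτ).fun_sub
    ((Real.hasDerivAt_sin x).fun_mul (hasDerivAt_deriv_tauLeft ρ x))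
  rw [e.deriv_eq, (hn.fun_div (hτ.fun_pow 2) (pow_ne_zero 2 h)).deriv]
  push_cast
  ring

/-- For `ρ > 0`, `τ(x) ≥ 1` on `x ≤ 0`, and `u(x) = sin x / τ(x)` solves the
Schrödinger equation `-u'' + q₀ u = u` at the embedded energy `1` on `x < 0`. -/
theorem sin_div_tau_solves_schrodinger (ρ : ℝ) (hρ : 0 < ρ) :
    (∀ x : ℝ, x ≤ 0 → 1 ≤ tauLeft ρ x) ∧
    (∀ x : ℝ, x < 0 →
      -(deriv (deriv (fun t => Real.sin t / tauLeft ρ t)) x)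
          + qWvN ρ x * (Real.sin x / tauLeft ρ x)
        = Real.sin x / tauLeft ρ x) := by
  refine ⟨fun x hx => one_le_tauLeft hρ hx, fun x hx => ?_⟩
  have h : tauLeft ρ x ≠ 0 := (zero_lt_one.trans_le (one_le_tauLeft hρ hx.le)).ne'
  rw [deriv_deriv_sin_div_tauLeft h, qWvN_eq h]
  field_simp
  ring
end

section
/- Let φ : ℝ → ℝ be measurable with φ² integrable on (−∞, x] for every real x, set I(x) = ∫_{−∞}^{x} φ(s)² ds, and assume I(x) → ∞ as x → +∞. Then for every nonzero real α the function y(x) = α·φ(x)/(1 + α²·I(x)) is square integrable on ℝ and ∫_ℝ y(x)² dx = 1. -/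
/-!
Put `I x = ∫_{-∞}^x φ²` and `F = -1 / (1 + α² I)`. By the Lebesgue differentiation theorem
`I' = φ²` almost everywhere, hence `F' = α² φ² / (1 + α² I)² = y²` almost everywhere. Since `φ` is
merely measurable, the fundamental theorem of calculus needs absolute continuity of `F`: it holds
because `I` is an indefinite integral and `t ↦ -1 / (1 + α² t)` is Lipschitz on `[0, ∞)`
(`absolutelyContinuous_neg_inv`). Thus `∫_a^b y² = F b - F a`, which tends to `0 - (-1) = 1` as
`a → -∞` and `b → ∞`, because `I → 0` at `-∞` and `I → ∞` at `+∞`. As `y² ≥ 0`, the convergence of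
these integrals gives integrability on the whole line.
-/

open Filter Topology MeasureTheory

lemma absolutelyContinuous_neg_inv {I : ℝ → ℝ} {a b c : ℝ} (hc : 0 ≤ c) (hI : ∀ x, 0 ≤ I x)
    (h : AbsolutelyContinuousOnInterval I a b) :
    AbsolutelyContinuousOnInterval (fun x => -(1 + c * I x)⁻¹) a b := by
  unfold AbsolutelyContinuousOnInterval at h ⊢
  refine squeeze_zero (fun t => Finset.sum_nonneg fun i _ => dist_nonneg) (fun t => ?_)
    (by simpa using h.const_mul c)
  rw [Finset.mul_sum]
  refine Finset.sum_le_sum fun i _ => ?_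
  generalize (t.2 i).1 = x
  generalize (t.2 i).2 = y
  have hx : 1 ≤ 1 + c * I x := by nlinarith [mul_nonneg hc (hI x)]
  have hy : 1 ≤ 1 + c * I y := by nlinarith [mul_nonneg hc (hI y)]
  have e : -(1 + c * I x)⁻¹ - -(1 + c * I y)⁻¹
      = c * (I x - I y) / ((1 + c * I x) * (1 + c * I y)) := by
    have : 1 + c * I x ≠ 0 := by positivity
    have : 1 + c * I y ≠ 0 := by positivity
    field_simp
    ring
  have hxy : 1 ≤ (1 + c * I x) * (1 + c * I y) := one_le_mul_of_one_le_of_one_le hx hy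
  rw [Real.dist_eq, Real.dist_eq, e, abs_div, abs_mul, abs_of_nonneg hc,
    abs_of_pos (zero_lt_one.trans_le hxy)]
  exact div_le_self (by positivity) hxy

/-- Normalization of the eigenfunction produced by the one-eigenvalue binary
Darboux transformation: `y(x) = α φ(x) / (1 + α² ∫_{-∞}^x φ²)` has `L²` norm `1`. -/
theorem darboux_eigenfunction_normalized (φ : ℝ → ℝ) (hmeas : Measurable φ)
    (hint : ∀ x : ℝ, IntegrableOn (fun s => (φ s)^2) (Set.Iic x))
    (hdiv : Tendsto (fun x => ∫ s in Set.Iic x, (φ s)^2) atTop atTop)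
    (α : ℝ) (hα : α ≠ 0) :
    Integrable (fun x => (α * φ x / (1 + α^2 * ∫ s in Set.Iic x, (φ s)^2))^2) ∧
    (∫ x : ℝ, (α * φ x / (1 + α^2 * ∫ s in Set.Iic x, (φ s)^2))^2) = 1 := by
  have hα2 : 0 < α ^ 2 := by positivity
  set I : ℝ → ℝ := fun x => ∫ s in Set.Iic x, (φ s)^2 with hIdef
  change Integrable (fun x => (α * φ x / (1 + α^2 * I x))^2) ∧
    (∫ x : ℝ, (α * φ x / (1 + α^2 * I x))^2) = 1
  have hI0 : ∀ x, 0 ≤ I x := fun x => integral_nonneg fun s => sq_nonneg _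
  have hpos : ∀ x, 0 < 1 + α ^ 2 * I x := fun x => by
    have := mul_nonneg hα2.le (hI0 x)
    linarith
  have hIsplit : ∀ a x, I x = I a + ∫ s in a..x, (φ s)^2 := fun a x => by
    rw [← intervalIntegral.integral_Iic_sub_Iic (hint a) (hint x)]
    simp [hIdef]
  have hii : ∀ a b, IntervalIntegrable (fun s => (φ s)^2) volume a b := fun a b =>
    intervalIntegrable_iff.mpr ((hint (max a b)).mono_set fun x hx => hx.2)
  have hloc : LocallyIntegrable (fun s => (φ s)^2) volume := fun x =>
    ⟨Set.Iic (x + 1), Iic_mem_nhds (by linarith), hint _⟩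
  have hderivI : ∀ᵐ x, HasDerivAt I ((φ x)^2) x := by
    filter_upwards [LocallyIntegrable.ae_hasDerivAt_integral hloc] with x hx
    rw [funext (hIsplit 0)]
    exact (hx 0).const_add _
  have hAC : ∀ a b, AbsolutelyContinuousOnInterval (fun x => -(1 + α ^ 2 * I x)⁻¹) a b := by
    intro a b
    refine absolutelyContinuous_neg_inv hα2.le hI0 ?_
    rw [funext (hIsplit a)]
    exact AbsolutelyContinuousOnInterval.fun_add
      (LipschitzWith.const (I a)).lipschitzOnWith.absolutelyContinuousOnInterval
      ((hii a b).absolutelyContinuousOnInterval_intervalIntegral Set.left_mem_uIcc)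
  have hderivF : ∀ᵐ x, deriv (fun x => -(1 + α ^ 2 * I x)⁻¹) x
      = (α * φ x / (1 + α^2 * I x))^2 := by
    filter_upwards [hderivI] with x hx
    have := ((hx.const_mul (α ^ 2)).const_add 1).fun_inv (hpos x).ne' |>.fun_neg
    rw [this.deriv, neg_div, neg_neg, div_pow, mul_pow]
  have hFTC : ∀ a b, ∫ x in a..b, (α * φ x / (1 + α^2 * I x))^2
      = (1 + α ^ 2 * I a)⁻¹ - (1 + α ^ 2 * I b)⁻¹ := by
    intro a b
    rw [← intervalIntegral.integral_congr_ae (hderivF.mono fun x hx _ => hx),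
      (hAC a b).integral_deriv_eq_sub]
    ring
  have hbot : Tendsto (fun n : ℕ => I (-(n : ℝ))) atTop (𝓝 0) :=
    tendsto_integral_Iic_zero (tendsto_neg_atTop_atBot.comp tendsto_natCast_atTop_atTop)
  have hlim : Tendsto (fun n : ℕ => ∫ x in (-(n : ℝ))..n, (α * φ x / (1 + α^2 * I x))^2)
      atTop (𝓝 1) := by
    simp only [hFTC]
    have h1 : Tendsto (fun n : ℕ => (1 + α ^ 2 * I (-(n : ℝ)))⁻¹) atTop (𝓝 1) := by
      simpa using ((hbot.const_mul (α ^ 2)).const_add 1).inv₀ (by simp)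
    have h2 : Tendsto (fun n : ℕ => (1 + α ^ 2 * I n)⁻¹) atTop (𝓝 0) :=
      (tendsto_atTop_add_const_left _ 1 ((hdiv.const_mul_atTop hα2).comp
        tendsto_natCast_atTop_atTop)).inv_tendsto_atTop
    simpa using h1.sub h2
  have ha : Tendsto (fun n : ℕ => -(n : ℝ)) atTop atBot :=
    tendsto_neg_atTop_atBot.comp tendsto_natCast_atTop_atTop
  have hInt : Integrable (fun x => (α * φ x / (1 + α^2 * I x))^2) := by
    refine integrable_of_intervalIntegral_norm_tendsto 1 (fun n : ℕ => ?_) ha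
      tendsto_natCast_atTop_atTop (by simpa only [Real.norm_eq_abs, abs_sq] using hlim)
    have hd := (hAC (-(n : ℝ)) n).intervalIntegrable_deriv.1
    exact hd.congr (ae_restrict_of_ae hderivF)
  exact ⟨hInt, tendsto_nhds_unique
    (intervalIntegral_tendsto_integral hInt ha tendsto_natCast_atTop_atTop) hlim⟩
end

section
/- Define σ(x,t) = 1 + x + 12t − (1/2)·sin(2(x + 4t)) and, at points where σ(x,t) ≠ 0, define u(x,t) = −2·(∂ₓ²σ·σ − (∂ₓσ)²)/σ². Then for every fixed t, x·u(x,t) + 4·sin(2(x + 4t)) → 0 both as x → +∞ and as x → −∞; that is, u(x,t) ∼ −4 sin(2(x+4t))/x as x → ±∞. -/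
/-!
Write `s = sin 2(x + 4t)` and `c = cos 2(x + 4t)`. Then `σ_x = 1 - c` and `σ_xx = 2 s`, and
`x = σ - b` with `b = 1 + 12 t - s / 2` bounded in `x`. Substituting, wherever `σ ≠ 0`,
`x u + 4 s = (4 s b + 2 (1 - c)²) / σ - 2 (1 - c)² b / σ²`.
The numerators are bounded and `1 / σ → 0` at both ends (`σ` differs from `x` by a bounded
quantity), so the expression tends to `0`; this also shows that `σ` is eventually nonzero.
-/

open Filter Topology

/-- The positon tau function `σ(x,t) = 1 + x + 12t - (1/2) sin 2(x + 4t)`. -/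
noncomputable def sigmaPos (x t : ℝ) : ℝ :=
  1 + x + 12 * t - (1 / 2) * Real.sin (2 * (x + 4 * t))

/-- The one-positon solution `u = -2 (σ_{xx} σ - σ_x²) / σ²`. -/
noncomputable def uPos (x t : ℝ) : ℝ :=
  -2 * (deriv (deriv (fun y => sigmaPos y t)) x * sigmaPos x t
          - (deriv (fun y => sigmaPos y t) x)^2) / (sigmaPos x t)^2

lemma deriv_sigmaPos (t : ℝ) :
    deriv (fun y => sigmaPos y t) = fun x => 1 - Real.cos (2 * (x + 4 * t)) := by
  funext x
  have hl : HasDerivAt (fun y : ℝ => 2 * (y + 4 * t)) (2 * 1) x :=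
    ((hasDerivAt_id' x).add_const (4 * t)).const_mul 2
  have h : HasDerivAt (fun y => sigmaPos y t)
      (1 - (1 / 2) * (Real.cos (2 * (x + 4 * t)) * (2 * 1))) x :=
    (((hasDerivAt_id' x).const_add 1).add_const (12 * t)).sub (hl.sin.const_mul (1 / 2))
  rw [h.deriv]
  ring

lemma deriv_deriv_sigmaPos (t x : ℝ) :
    deriv (deriv (fun y => sigmaPos y t)) x = 2 * Real.sin (2 * (x + 4 * t)) := by
  rw [deriv_sigmaPos]
  have hl : HasDerivAt (fun y : ℝ => 2 * (y + 4 * t)) (2 * 1) x :=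
    ((hasDerivAt_id' x).add_const (4 * t)).const_mul 2
  rw [(hl.cos.const_sub 1).deriv]
  ring

lemma mul_uPos_add (t x : ℝ) (h : sigmaPos x t ≠ 0) :
    x * uPos x t + 4 * Real.sin (2 * (x + 4 * t)) =
      (4 * Real.sin (2 * (x + 4 * t)) * (1 + 12 * t - 1 / 2 * Real.sin (2 * (x + 4 * t)))
        + 2 * (1 - Real.cos (2 * (x + 4 * t))) ^ 2) * (sigmaPos x t)⁻¹
      + (-2 * (1 - Real.cos (2 * (x + 4 * t))) ^ 2
        * (1 + 12 * t - 1 / 2 * Real.sin (2 * (x + 4 * t))))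
        * ((sigmaPos x t)⁻¹ * (sigmaPos x t)⁻¹) := by
  have hx : 1 + 12 * t - 1 / 2 * Real.sin (2 * (x + 4 * t)) = sigmaPos x t - x := by
    unfold sigmaPos; ring
  rw [hx, uPos, deriv_deriv_sigmaPos, deriv_sigmaPos]
  field_simp
  ring

/-- The common part of both limits: only `σ ≠ 0` eventually and `1 / σ → 0` matter. -/
lemma tendsto_mul_uPos_add {l : Filter ℝ} (t : ℝ) (hne : ∀ᶠ x in l, sigmaPos x t ≠ 0)
    (hinv : Tendsto (fun x => (sigmaPos x t)⁻¹) l (𝓝 0)) :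
    Tendsto (fun x : ℝ => x * uPos x t + 4 * Real.sin (2 * (x + 4 * t))) l (𝓝 0) := by
  have hs (x : ℝ) : |Real.sin (2 * (x + 4 * t))| ≤ 1 := Real.abs_sin_le_one _
  have hb (x : ℝ) : |1 + 12 * t - 1 / 2 * Real.sin (2 * (x + 4 * t))| ≤ |1 + 12 * t| + 1 := by
    refine (abs_sub _ _).trans ?_
    rw [abs_mul, abs_of_pos (by norm_num : (0 : ℝ) < 1 / 2)]
    linarith [hs x]
  have hc (x : ℝ) : |2 * (1 - Real.cos (2 * (x + 4 * t))) ^ 2| ≤ 8 := by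
    rw [abs_of_nonneg (by positivity)]
    nlinarith [Real.neg_one_le_cos (2 * (x + 4 * t)), Real.cos_le_one (2 * (x + 4 * t))]
  have h1 := bdd_le_mul_tendsto_zero' (4 * (|1 + 12 * t| + 1) + 8)
    (f := fun x : ℝ =>
      4 * Real.sin (2 * (x + 4 * t)) * (1 + 12 * t - 1 / 2 * Real.sin (2 * (x + 4 * t)))
        + 2 * (1 - Real.cos (2 * (x + 4 * t))) ^ 2)
    (Eventually.of_forall fun x => by
      refine (abs_add_le _ _).trans (add_le_add ?_ (hc x))
      rw [abs_mul, abs_mul, abs_of_pos (by norm_num : (0 : ℝ) < 4)]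
      exact mul_le_mul (by linarith [hs x]) (hb x) (abs_nonneg _) (by norm_num)) hinv
  have hinv2 : Tendsto (fun x => (sigmaPos x t)⁻¹ * (sigmaPos x t)⁻¹) l (𝓝 0) := by
    simpa using hinv.mul hinv
  have h2 := bdd_le_mul_tendsto_zero' (8 * (|1 + 12 * t| + 1))
    (f := fun x : ℝ => -2 * (1 - Real.cos (2 * (x + 4 * t))) ^ 2
        * (1 + 12 * t - 1 / 2 * Real.sin (2 * (x + 4 * t))))
    (Eventually.of_forall fun x => by
      rw [abs_mul, neg_mul, abs_neg]
      exact mul_le_mul (hc x) (hb x) (abs_nonneg _) (by norm_num)) hinv2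
  have h := h1.add h2
  rw [add_zero] at h
  refine h.congr' ?_
  filter_upwards [hne] with x hx
  exact (mul_uPos_add t x hx).symm

/-- For every fixed `t`, `u(x,t) ∼ -4 sin 2(x + 4t) / x` as `x → ±∞`. -/
theorem positon_asymptotics :
    ∀ t : ℝ,
      Tendsto (fun x : ℝ => x * uPos x t + 4 * Real.sin (2 * (x + 4 * t)))
        atTop (𝓝 0) ∧
      Tendsto (fun x : ℝ => x * uPos x t + 4 * Real.sin (2 * (x + 4 * t)))
        atBot (𝓝 0) := by
  intro t
  have htop : Tendsto (fun x => sigmaPos x t) atTop atTop := by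
    refine tendsto_atTop_mono (fun x => ?_) (tendsto_atTop_add_const_right atTop (12 * t) tendsto_id)
    have := Real.sin_le_one (2 * (x + 4 * t))
    simp only [sigmaPos, id]
    linarith
  have hbot : Tendsto (fun x => sigmaPos x t) atBot atBot := by
    refine tendsto_atBot_mono (fun x => ?_)
      (tendsto_atBot_add_const_right atBot (12 * t + 2) tendsto_id)
    have := Real.neg_one_le_sin (2 * (x + 4 * t))
    simp only [sigmaPos, id]
    linarith
  exact ⟨tendsto_mul_uPos_add t (htop.eventually_ne_atTop 0) (tendsto_inv_atTop_zero.comp htop),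
    tendsto_mul_uPos_add t (hbot.eventually_ne_atBot 0) (tendsto_inv_atBot_zero.comp hbot)⟩
end
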